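/- Let λ ∈ ℝ be a root of det φ_{p+1}, P the orthogonal projection onto E = Ker φ_{p+1}(λ), and χ the solution with χ_{p+1} = 0, χ_p = I. Then χ₁(λ) φ_p(λ) P = P. -/

import Mathlib

open Matrix

/-- For a real root `λ` of `det φ_{p+1}` with orthogonal projection `P` onto
`E = Ker φ_{p+1}(λ)`, and `χ` the solution with `χ_{p+1} = 0`, `χ_p = I`, one has
`χ₁(λ) φ_p(λ) P = P`. -/
theorem chi_one_phi_p_eq_proj (m p : ℕ) (hp : 1 ≤ p)
    (a b : ℕ → Matrix (Fin m) (Fin m) ℂ)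
    (ha0 : a 0 = 1) (hap : a p = 1)
    (hb : ∀ n, 1 ≤ n → n ≤ p → (b n).IsHermitian)
    (haInv : ∀ n, n ≤ p → IsUnit (a n))
    (φ χ : ℕ → ℂ → Matrix (Fin m) (Fin m) ℂ)
    (hφ0 : ∀ z, φ 0 z = 0) (hφ1 : ∀ z, φ 1 z = 1)
    (hφ : ∀ (z : ℂ) (n : ℕ), 1 ≤ n → n ≤ p →
      a n * φ (n + 1) z + b n * φ n z + (a (n - 1))ᴴ * φ (n - 1) z = z • φ n z)
    (hχp1 : ∀ z, χ (p + 1) z = 0) (hχp : ∀ z, χ p z = 1)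
    (hχ : ∀ (z : ℂ) (n : ℕ), 1 ≤ n → n ≤ p →
      a n * χ (n + 1) z + b n * χ n z + (a (n - 1))ᴴ * χ (n - 1) z = z • χ n z)
    (lam : ℝ) (hroot : (φ (p + 1) (lam : ℂ)).det = 0)
    (P : Matrix (Fin m) (Fin m) ℂ)
    (hPherm : Pᴴ = P) (hPidem : P * P = P)
    (hPker : ∀ h : Fin m → ℂ, φ (p + 1) (lam : ℂ) *ᵥ h = 0 ↔ P *ᵥ h = h) :
    χ 1 (lam : ℂ) * φ p (lam : ℂ) * P = P := by
  have hφP : φ (p + 1) (lam : ℂ) * P = 0 := by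
    apply Matrix.ext_of_mulVec_single
    intro i
    rw [← Matrix.mulVec_mulVec, Matrix.zero_mulVec]
    apply (hPker _).2
    rw [Matrix.mulVec_mulVec, hPidem]
  have key : ∀ k n : ℕ, n + k = p →
      χ n (lam : ℂ) * (φ p (lam : ℂ) * P) - φ n (lam : ℂ) * P = 0 ∧
      χ (n + 1) (lam : ℂ) * (φ p (lam : ℂ) * P) - φ (n + 1) (lam : ℂ) * P = 0 := by
    intro k
    induction k with
    | zero =>
      intro n hn
      obtain rfl : n = p := by omega
      simp [hχp, hχp1, hφP]
    | succ k ih =>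
      intro n hn
      obtain ⟨h1, h2⟩ := ih (n + 1) (by omega)
      refine ⟨?_, h1⟩
      have e1 := hχ lam (n + 1) (by omega) (by omega)
      have e2 := hφ lam (n + 1) (by omega) (by omega)
      simp only [Nat.add_sub_cancel] at e1 e2
      have hu : IsUnit (a n)ᴴ := (haInv n (by omega)).star
      apply hu.mul_left_cancel
      have f1 : (a n)ᴴ * χ n (lam : ℂ) = (lam : ℂ) • χ (n + 1) (lam : ℂ)
          - a (n + 1) * χ (n + 1 + 1) (lam : ℂ) - b (n + 1) * χ (n + 1) (lam : ℂ) := by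
        rw [← e1]; abel
      have f2 : (a n)ᴴ * φ n (lam : ℂ) = (lam : ℂ) • φ (n + 1) (lam : ℂ)
          - a (n + 1) * φ (n + 1 + 1) (lam : ℂ) - b (n + 1) * φ (n + 1) (lam : ℂ) := by
        rw [← e2]; abel
      rw [mul_sub, ← mul_assoc, ← mul_assoc (a n)ᴴ (φ n _), f1, f2]
      simp only [sub_mul, smul_mul_assoc, mul_assoc]
      rw [sub_eq_zero.1 h1, sub_eq_zero.1 h2]
      simp
  have h := (key (p - 1) 1 (by omega)).1
  rw [hφ1, one_mul, ← mul_assoc] at h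
  exact sub_eq_zero.1 h
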